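/- Let r > 0 and let f : ℝ^d → ℝ be bounded and continuous. Define the kernel u⁻(y,z) = (|y|^2 - |z|^2)^{α/2} / (|z|^α |z - y|^d) for 0 < |z| < |y|. Then lim_{δ→0+} sup_{y : r-δ < |y| ≤ r} | (∫_{r-δ ≤ |z| ≤ |y|} u⁻(y,z) f(z) dz) / (∫_{r-δ ≤ |z| ≤ |y|} u⁻(y,z) dz) − f(y) | = 0. (This is the analytic content of Lemma 3.1, with the explicit expected-occupation density of the radial minima from Theorem 1.1 substituted for U⁻_y.) -/

import Mathlib

open MeasureTheory Real Set Filter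

/-!
The kernel `u⁻(y, ·)` on the shell `s ≤ |z| ≤ |y|` is an approximate identity at `y` as
`s ↑ |y|`. Put `h = |y| - s`. Away from `y` the factor `|z - y|⁻ᵈ` is bounded, so the mass of the
shell outside a fixed ball around `y` is at most a constant times `h ^ (α / 2)` times the volume of
the shell. A ball of radius `h / 4` around the point at half depth below `y` has volume of order
`hᵈ`, and there `|z - y|⁻ᵈ ≥ h⁻ᵈ` compensates exactly: it alone contributes a mass of order
`h ^ (α / 2)`. The proportion of mass away from `y` is thus at most a constant times the volume of
the shell, which vanishes with `h` uniformly in `y`.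
-/

section WeightedMean

variable {X F : Type*} [MeasurableSpace X] {μ : Measure X} [NormedAddCommGroup F] [NormedSpace ℝ F]
  {A B : Set X} {k : X → ℝ} {f : X → F}

/-- The mean of `f` over the set `A` with respect to the (unnormalized) weight `k`. It takes the
junk value `0` when the total weight is zero or infinite. -/
noncomputable def weightedMean (μ : Measure X) (A : Set X) (k : X → ℝ) (f : X → F) : F :=
  (∫ x in A, k x ∂μ)⁻¹ • ∫ x in A, k x • f x ∂μ

theorem norm_setIntegral_smul_le {C : ℝ} (hA : MeasurableSet A) (hk : IntegrableOn k A μ)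
    (hk0 : ∀ x ∈ A, 0 ≤ k x) (hf : ∀ x ∈ A, ‖f x‖ ≤ C) :
    ‖∫ x in A, k x • f x ∂μ‖ ≤ C * ∫ x in A, k x ∂μ := by
  rw [← integral_const_mul]
  refine norm_integral_le_of_norm_le (hk.const_mul C) (ae_restrict_of_forall_mem hA fun x hx => ?_)
  rw [norm_smul, Real.norm_of_nonneg (hk0 x hx), mul_comm]
  exact mul_le_mul_of_nonneg_right (hf x hx) (hk0 x hx)

theorem norm_setIntegral_smul_le_add {ε M : ℝ} (hA : MeasurableSet A) (hB : MeasurableSet B)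
    (hk : IntegrableOn k A μ) (hkf : IntegrableOn (fun x => k x • f x) A μ)
    (hk0 : ∀ x ∈ A, 0 ≤ k x) (hε : 0 ≤ ε) (hfB : ∀ x ∈ A ∩ B, ‖f x‖ ≤ ε)
    (hfA : ∀ x ∈ A, ‖f x‖ ≤ M) :
    ‖∫ x in A, k x • f x ∂μ‖ ≤ ε * ∫ x in A, k x ∂μ + M * ∫ x in A \ B, k x ∂μ := by
  have hmono : ∫ x in A ∩ B, k x ∂μ ≤ ∫ x in A, k x ∂μ :=
    setIntegral_mono_set hk (ae_restrict_of_forall_mem hA hk0) inter_subset_left.eventuallyLE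
  have hin := norm_setIntegral_smul_le (hA.inter hB) (hk.mono_set inter_subset_left)
    (fun x hx => hk0 x hx.1) hfB
  have hout := norm_setIntegral_smul_le (hA.diff hB) (hk.mono_set sdiff_subset)
    (fun x hx => hk0 x hx.1) fun x hx => hfA x hx.1
  rw [← integral_inter_add_sdiff hB hkf]
  exact (norm_add_le _ _).trans
    (add_le_add (hin.trans (mul_le_mul_of_nonneg_left hmono hε)) hout)

theorem norm_weightedMean_sub_le [CompleteSpace F] {c : F} {ε M : ℝ} (hA : MeasurableSet A)
    (hB : MeasurableSet B) (hk : IntegrableOn k A μ)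
    (hkf : IntegrableOn (fun x => k x • f x) A μ) (hk0 : ∀ x ∈ A, 0 ≤ k x)
    (hpos : 0 < ∫ x in A, k x ∂μ) (hε : 0 ≤ ε) (hfB : ∀ x ∈ A ∩ B, ‖f x - c‖ ≤ ε)
    (hfA : ∀ x ∈ A, ‖f x - c‖ ≤ M) :
    ‖weightedMean μ A k f - c‖ ≤ ε + M * ((∫ x in A \ B, k x ∂μ) / ∫ x in A, k x ∂μ) := by
  have hkc : IntegrableOn (fun x => k x • c) A μ := hk.smul_const c
  have hmean : weightedMean μ A k f - c =
      (∫ x in A, k x ∂μ)⁻¹ • ∫ x in A, k x • (f x - c) ∂μ := by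
    simp only [smul_sub]
    rw [integral_sub hkf hkc, integral_smul_const, smul_sub, inv_smul_smul₀ hpos.ne', weightedMean]
  have hint : IntegrableOn (fun x => k x • (f x - c)) A μ := by
    simp only [smul_sub]
    exact hkf.sub hkc
  rw [hmean, norm_smul, norm_inv, Real.norm_of_nonneg hpos.le, inv_mul_le_iff₀ hpos]
  refine (norm_setIntegral_smul_le_add hA hB hk hint hk0 hε hfB hfA).trans_eq ?_
  field_simp

end WeightedMean

theorem tendsto_iSup_zero_of_eventually_forall_le {ι : Type*} {β : ι → Type*} {l : Filter ι}
    {g : ∀ i, β i → ℝ} (hg : ∀ i b, 0 ≤ g i b) (h : ∀ ε > 0, ∀ᶠ i in l, ∀ b, g i b ≤ ε) :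
    Tendsto (fun i => ⨆ b, g i b) l (nhds 0) := by
  refine tendsto_order.2 ⟨fun a ha => Eventually.of_forall fun i =>
    ha.trans_le (Real.iSup_nonneg (hg i)), fun a ha => ?_⟩
  filter_upwards [h (a / 2) (half_pos ha)] with i hi
  exact (Real.iSup_le hi (half_pos ha).le).trans_lt (half_lt_self ha)

theorem measureReal_ball_pos {X : Type*} [PseudoMetricSpace X] [ProperSpace X] [MeasurableSpace X]
    {μ : Measure X} [μ.IsOpenPosMeasure] [IsFiniteMeasureOnCompacts μ] (x : X) {t : ℝ}
    (ht : 0 < t) : 0 < μ.real (Metric.ball x t) :=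
  ENNReal.toReal_pos (Metric.measure_ball_pos μ x ht).ne' measure_ball_lt_top.ne

section RadialMinima

open Metric Module

variable {E : Type*} [NormedAddCommGroup E]

/-- The closed shell `s ≤ |z| ≤ t` centred at the origin. -/
def closedAnnulus (E : Type*) [NormedAddCommGroup E] (s t : ℝ) : Set E :=
  {z | s ≤ ‖z‖ ∧ ‖z‖ ≤ t}

theorem isClosed_closedAnnulus (s t : ℝ) : IsClosed (closedAnnulus E s t) :=
  (isClosed_le continuous_const continuous_norm).inter
    (isClosed_le continuous_norm continuous_const)

theorem closedAnnulus_subset_closedBall (s t : ℝ) : closedAnnulus E s t ⊆ closedBall 0 t :=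
  fun _ hz => mem_closedBall_zero_iff.2 hz.2

theorem isCompact_closedAnnulus [ProperSpace E] (s t : ℝ) : IsCompact (closedAnnulus E s t) :=
  (isCompact_closedBall 0 t).of_isClosed_subset (isClosed_closedAnnulus s t)
    (closedAnnulus_subset_closedBall s t)

variable [NormedSpace ℝ E]

theorem exists_ball_subset_closedAnnulus {s : ℝ} (hs : 0 ≤ s) {y : E} (hsy : s < ‖y‖) :
    ∃ w : E, ∀ z ∈ ball w ((‖y‖ - s) / 4),
      z ∈ closedAnnulus E s ‖y‖ ∧ (‖y‖ - s) / 4 ≤ ‖y‖ - ‖z‖ ∧ ‖z - y‖ ≤ ‖y‖ - s := by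
  have hy : 0 < ‖y‖ := hs.trans_lt hsy
  set w : E := ((s + ‖y‖) / (2 * ‖y‖)) • y
  have hw : ‖w‖ = (s + ‖y‖) / 2 := by
    rw [norm_smul, Real.norm_of_nonneg (by positivity)]
    field_simp
  have hwy : ‖w - y‖ = (‖y‖ - s) / 2 := by
    have hsub : w - y = -((‖y‖ - s) / (2 * ‖y‖)) • y := by
      rw [← sub_eq_zero]
      match_scalars
      field_simp
      ring
    rw [hsub, norm_smul, norm_neg, Real.norm_of_nonneg (div_nonneg (by linarith) (by positivity))]
    field_simp
  refine ⟨w, fun z hz => ?_⟩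
  rw [mem_ball_iff_norm] at hz
  have hzw : |‖z‖ - ‖w‖| < (‖y‖ - s) / 4 := (abs_norm_sub_norm_le z w).trans_lt hz
  have hzy : ‖z - y‖ ≤ ‖z - w‖ + ‖w - y‖ := norm_sub_le_norm_sub_add_norm_sub z w y
  obtain ⟨hlow, hup⟩ := abs_lt.1 hzw
  exact ⟨⟨by linarith, by linarith⟩, by linarith, by linarith⟩

/-- The kernel `u⁻(y, z) = (|y|² - |z|²) ^ (α / 2) / (|z| ^ α |z - y| ^ d)` with `d = dim E`, the
density of the expected occupation of the radial minima. It is meant for `0 < |z| < |y|`. -/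
noncomputable def radialMinimaKernel (α : ℝ) (y z : E) : ℝ :=
  (‖y‖ ^ 2 - ‖z‖ ^ 2) ^ (α / 2) / (‖z‖ ^ α * ‖z - y‖ ^ finrank ℝ E)

theorem radialMinimaKernel_nonneg {α : ℝ} {y z : E} (hz : ‖z‖ ≤ ‖y‖) :
    0 ≤ radialMinimaKernel α y z := by
  have : 0 ≤ ‖y‖ ^ 2 - ‖z‖ ^ 2 := sub_nonneg.2 (by gcongr)
  unfold radialMinimaKernel
  positivity

theorem radialMinimaKernel_le {α s h : ℝ} (hα : 0 ≤ α) (hs : 0 < s) {y z : E}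
    (hz : z ∈ closedAnnulus E s ‖y‖) (hgap : ‖y‖ - ‖z‖ ≤ h) :
    radialMinimaKernel α y z ≤ (2 * ‖y‖ * h) ^ (α / 2) / s ^ α / ‖z - y‖ ^ finrank ℝ E := by
  have hnonneg : 0 ≤ ‖y‖ ^ 2 - ‖z‖ ^ 2 := sub_nonneg.2 (by gcongr; exact hz.2)
  have hgap' : ‖y‖ ^ 2 - ‖z‖ ^ 2 ≤ 2 * ‖y‖ * h := by
    nlinarith [norm_nonneg y, norm_nonneg z, hz.2]
  have hsz : s ≤ ‖z‖ := hz.1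
  have hnum : 0 ≤ (2 * ‖y‖ * h) ^ (α / 2) := rpow_nonneg (hnonneg.trans hgap') _
  rw [radialMinimaKernel, ← div_div]
  gcongr

theorem le_radialMinimaKernel {α a h : ℝ} (hα : 0 ≤ α) {y z : E} (hz : z ≠ 0) (ha : 0 < a)
    (hgap : a ≤ ‖y‖ - ‖z‖) (hdist : ‖z - y‖ ≤ h) :
    (‖y‖ * a) ^ (α / 2) / (‖y‖ ^ α * h ^ finrank ℝ E) ≤ radialMinimaKernel α y z := by
  have hz0 : 0 < ‖z‖ := norm_pos_iff.2 hz
  have hzy : 0 < ‖z - y‖ := by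
    rw [norm_pos_iff, sub_ne_zero]
    rintro rfl
    linarith
  have hle : ‖z‖ ≤ ‖y‖ := by linarith
  have hgap' : ‖y‖ * a ≤ ‖y‖ ^ 2 - ‖z‖ ^ 2 := by nlinarith
  have hnum : 0 ≤ (‖y‖ ^ 2 - ‖z‖ ^ 2) ^ (α / 2) := rpow_nonneg (hgap'.trans' (by positivity)) _
  unfold radialMinimaKernel
  gcongr

variable [MeasurableSpace E] [BorelSpace E]

theorem measurable_radialMinimaKernel (α : ℝ) (y : E) : Measurable (radialMinimaKernel α y) := by
  unfold radialMinimaKernel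
  fun_prop

variable [FiniteDimensional ℝ E] {μ : Measure E} [μ.IsAddHaarMeasure]

theorem measureReal_ball_of_pos (x : E) {t : ℝ} (ht : 0 < t) :
    μ.real (ball x t) = t ^ finrank ℝ E * μ.real (ball (0 : E) 1) := by
  rw [measureReal_def, Measure.addHaar_ball_of_pos μ x ht, ENNReal.toReal_mul,
    ENNReal.toReal_ofReal (by positivity), measureReal_def]

theorem measureReal_closedAnnulus_le {s t : ℝ} (hs : 0 < s) (hst : s ≤ t) :
    μ.real (closedAnnulus E s t) ≤
      (t ^ finrank ℝ E - s ^ finrank ℝ E) * μ.real (ball (0 : E) 1) := by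
  have hsub : closedAnnulus E s t ⊆ closedBall 0 t \ ball 0 s := fun z hz =>
    ⟨closedAnnulus_subset_closedBall s t hz, fun h => (mem_ball_zero_iff.1 h).not_ge hz.1⟩
  calc μ.real (closedAnnulus E s t) ≤ μ.real (closedBall 0 t \ ball 0 s) :=
        measureReal_mono hsub (measure_ne_top_of_subset sdiff_subset measure_closedBall_lt_top.ne)
    _ = (t ^ finrank ℝ E - s ^ finrank ℝ E) * μ.real (ball (0 : E) 1) := by
      rw [measureReal_sdiff ((ball_subset_ball hst).trans ball_subset_closedBall)
        measurableSet_ball measure_closedBall_lt_top.ne,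
        Measure.addHaar_real_closedBall μ _ (hs.le.trans hst), measureReal_ball_of_pos 0 hs,
        sub_mul]

theorem integrableOn_closedBall_norm_sub_rpow [Nontrivial E] {p : ℝ} (hp : -(finrank ℝ E : ℝ) < p)
    (y : E) (R : ℝ) : IntegrableOn (fun z => ‖z - y‖ ^ p) (closedBall y R) μ := by
  have hloc : LocallyIntegrable (fun x : E => ‖x‖ ^ p) μ :=
    locallyIntegrable_of_norm_le_rpow (C := 1) (α := -p) finrank_pos (neg_lt.1 hp)
      (Eventually.of_forall fun x => by simp [abs_of_nonneg, rpow_nonneg])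
      (measurable_norm.pow_const p).aestronglyMeasurable
  have hball : closedBall y R = (· - y) ⁻¹' closedBall 0 R := by
    ext z
    simp [dist_eq_norm]
  rw [hball]
  exact ((measurePreserving_sub_right μ y).integrableOn_comp_preimage
    (measurableEmbedding_subRight y)).2 (hloc.integrableOn_isCompact (isCompact_closedBall 0 R))

theorem integrableOn_radialMinimaKernel [Nontrivial E] {α s : ℝ} (hα : 0 < α) (hs : 0 < s) (y : E) :
    IntegrableOn (radialMinimaKernel α y) (closedAnnulus E s ‖y‖) μ := by
  have hsub : closedAnnulus E s ‖y‖ ⊆ closedBall y (2 * ‖y‖) := fun z hz => by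
    rw [mem_closedBall_iff_norm]
    linarith [norm_sub_le z y, hz.2]
  have hpow : IntegrableOn (fun z => ‖z - y‖ ^ (α / 2 - finrank ℝ E)) (closedAnnulus E s ‖y‖) μ :=
    (integrableOn_closedBall_norm_sub_rpow (by linarith) y _).mono_set hsub
  refine Integrable.mono' (hpow.const_mul ((2 * ‖y‖) ^ (α / 2) / s ^ α))
    (measurable_radialMinimaKernel α y).aestronglyMeasurable
    (ae_restrict_of_forall_mem (isClosed_closedAnnulus s _).measurableSet fun z hz => ?_)
  rw [Real.norm_of_nonneg (radialMinimaKernel_nonneg hz.2)]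
  rcases eq_or_ne z y with rfl | hne
  · have hzero : radialMinimaKernel α z z = 0 := by
      simp [radialMinimaKernel, finrank_pos.ne']
    rw [hzero]
    positivity
  · have hpos : 0 < ‖z - y‖ := norm_sub_pos_iff.2 hne
    have hgap : ‖y‖ - ‖z‖ ≤ ‖z - y‖ := norm_sub_rev z y ▸ norm_sub_norm_le y z
    refine (radialMinimaKernel_le hα.le hs hz hgap).trans_eq ?_
    rw [rpow_sub hpos, rpow_natCast, mul_rpow (by positivity) hpos.le]
    ring

theorem le_setIntegral_radialMinimaKernel [Nontrivial E] {α s : ℝ} (hα : 0 < α) (hs : 0 < s) {y : E}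
    (hsy : s < ‖y‖) :
    (‖y‖ * ((‖y‖ - s) / 4)) ^ (α / 2) / (‖y‖ ^ α * 4 ^ finrank ℝ E) * μ.real (ball (0 : E) 1) ≤
      ∫ z in closedAnnulus E s ‖y‖, radialMinimaKernel α y z ∂μ := by
  obtain ⟨w, hw⟩ := exists_ball_subset_closedAnnulus hs.le hsy
  have hgap : 0 < ‖y‖ - s := sub_pos.2 hsy
  have hsub : ball w ((‖y‖ - s) / 4) ⊆ closedAnnulus E s ‖y‖ := fun z hz => (hw z hz).1
  have hint := integrableOn_radialMinimaKernel (μ := μ) hα hs y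
  calc _ = (‖y‖ * ((‖y‖ - s) / 4)) ^ (α / 2) / (‖y‖ ^ α * (‖y‖ - s) ^ finrank ℝ E) *
        μ.real (ball w ((‖y‖ - s) / 4)) := by
        rw [measureReal_ball_of_pos w (by positivity), div_pow]
        field_simp
    _ ≤ ∫ z in ball w ((‖y‖ - s) / 4), radialMinimaKernel α y z ∂μ := by
        refine setIntegral_ge_of_const_le_real measurableSet_ball measure_ball_lt_top.ne
          (fun z hz => ?_) (hint.mono_set hsub)
        obtain ⟨hz, hdepth, hdist⟩ := hw z hz
        exact le_radialMinimaKernel hα.le (norm_pos_iff.1 (hs.trans_le hz.1)) (by positivity)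
          hdepth hdist
    _ ≤ ∫ z in closedAnnulus E s ‖y‖, radialMinimaKernel α y z ∂μ :=
        setIntegral_mono_set hint (ae_restrict_of_forall_mem
          (isClosed_closedAnnulus s _).measurableSet fun z hz => radialMinimaKernel_nonneg hz.2)
          hsub.eventuallyLE

theorem setIntegral_radialMinimaKernel_pos [Nontrivial E] {α s : ℝ} (hα : 0 < α) (hs : 0 < s)
    {y : E} (hsy : s < ‖y‖) :
    0 < ∫ z in closedAnnulus E s ‖y‖, radialMinimaKernel α y z ∂μ := by
  have hy : 0 < ‖y‖ := hs.trans hsy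
  have : 0 < ‖y‖ - s := sub_pos.2 hsy
  have hvol : 0 < μ.real (ball (0 : E) 1) := measureReal_ball_pos 0 one_pos
  exact (le_setIntegral_radialMinimaKernel hα hs hsy).trans_lt' (by positivity)

theorem setIntegral_radialMinimaKernel_sdiff_ball_le {α s η : ℝ} (hα : 0 ≤ α) (hs : 0 < s)
    (hη : 0 < η) {y : E} (hsy : s ≤ ‖y‖) :
    ∫ z in closedAnnulus E s ‖y‖ \ ball y η, radialMinimaKernel α y z ∂μ ≤
      (2 * ‖y‖ * (‖y‖ - s)) ^ (α / 2) / s ^ α / η ^ finrank ℝ E *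
        ((‖y‖ ^ finrank ℝ E - s ^ finrank ℝ E) * μ.real (ball (0 : E) 1)) := by
  have : 0 ≤ ‖y‖ - s := sub_nonneg.2 hsy
  have htop : μ (closedAnnulus E s ‖y‖) ≠ ⊤ := (isCompact_closedAnnulus s _).measure_ne_top
  have hbound : ∀ z ∈ closedAnnulus E s ‖y‖ \ ball y η, ‖radialMinimaKernel α y z‖ ≤
      (2 * ‖y‖ * (‖y‖ - s)) ^ (α / 2) / s ^ α / η ^ finrank ℝ E := fun z ⟨hz, hzη⟩ => by
    have hdist : η ≤ ‖z - y‖ := not_lt.1 fun h => hzη (mem_ball_iff_norm.2 h)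
    rw [Real.norm_of_nonneg (radialMinimaKernel_nonneg hz.2)]
    refine (radialMinimaKernel_le hα hs hz (sub_le_sub_left hz.1 _)).trans ?_
    gcongr
  calc _ ≤ (2 * ‖y‖ * (‖y‖ - s)) ^ (α / 2) / s ^ α / η ^ finrank ℝ E *
        μ.real (closedAnnulus E s ‖y‖ \ ball y η) :=
        (le_abs_self _).trans (norm_setIntegral_le_of_norm_le_const
          (measure_lt_top_of_subset sdiff_subset htop) hbound)
    _ ≤ _ := by
        gcongr
        exact (measureReal_mono sdiff_subset htop).trans (measureReal_closedAnnulus_le hs hsy)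

/-- A bound, in dimension `d`, for the proportion of the mass of the kernel `u⁻(y, ·)` on the shell
`s ≤ |z| ≤ |y| = t` that lies at distance at least `η` from `y`. -/
noncomputable def kernelTailBound (d : ℕ) (α η s t : ℝ) : ℝ :=
  8 ^ (α / 2) * 4 ^ d * (t / s) ^ α / η ^ d * (t ^ d - s ^ d)

theorem kernelTailBound_mono {d : ℕ} {α η s t t' : ℝ} (hα : 0 ≤ α) (hη : 0 ≤ η) (hs : 0 < s)
    (hst : s ≤ t) (htt' : t ≤ t') : kernelTailBound d α η s t ≤ kernelTailBound d α η s t' := by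
  have ht : 0 ≤ t := hs.le.trans hst
  have ht' : 0 ≤ t' := ht.trans htt'
  have hpow : 0 ≤ t ^ d - s ^ d := sub_nonneg.2 (by gcongr)
  unfold kernelTailBound
  gcongr

theorem tendsto_kernelTailBound (d : ℕ) (α η : ℝ) {t : ℝ} (ht : t ≠ 0) :
    Tendsto (fun s => kernelTailBound d α η s t) (nhds t) (nhds 0) := by
  have hcont : ContinuousAt (fun s => kernelTailBound d α η s t) t := by
    unfold kernelTailBound
    fun_prop (disch := simp [ht])
  simpa [kernelTailBound] using hcont.tendsto

theorem setIntegral_radialMinimaKernel_sdiff_ball_div_le [Nontrivial E] {α s η : ℝ} (hα : 0 < α)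
    (hs : 0 < s) (hη : 0 < η) {y : E} (hsy : s < ‖y‖) :
    (∫ z in closedAnnulus E s ‖y‖ \ ball y η, radialMinimaKernel α y z ∂μ) /
        ∫ z in closedAnnulus E s ‖y‖, radialMinimaKernel α y z ∂μ ≤
      kernelTailBound (finrank ℝ E) α η s ‖y‖ := by
  have hy : 0 < ‖y‖ := hs.trans hsy
  have hgap : 0 < ‖y‖ - s := sub_pos.2 hsy
  have hvol : 0 < μ.real (ball (0 : E) 1) := measureReal_ball_pos 0 one_pos
  have hpow : 0 ≤ ‖y‖ ^ finrank ℝ E - s ^ finrank ℝ E := sub_nonneg.2 (by gcongr)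
  have hrpow : (2 * ‖y‖ * (‖y‖ - s)) ^ (α / 2) =
      8 ^ (α / 2) * (‖y‖ * ((‖y‖ - s) / 4)) ^ (α / 2) := by
    rw [← mul_rpow (by norm_num) (by positivity)]
    ring_nf
  refine (div_le_div₀ (by positivity)
    (setIntegral_radialMinimaKernel_sdiff_ball_le hα.le hs hη hsy.le) (by positivity)
    (le_setIntegral_radialMinimaKernel hα hs hsy)).trans_eq ?_
  rw [hrpow, kernelTailBound, div_rpow hy.le hs.le]
  field_simp

variable {F : Type*} [NormedAddCommGroup F] [NormedSpace ℝ F] [CompleteSpace F] {f : E → F}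

theorem norm_weightedMean_radialMinimaKernel_sub_le [Nontrivial E] {α s η ε M : ℝ} (hα : 0 < α)
    (hs : 0 < s) (hη : 0 < η) {y : E} (hsy : s < ‖y‖) {c : F}
    (hf : ContinuousOn f (closedAnnulus E s ‖y‖))
    (hnear : ∀ z ∈ closedAnnulus E s ‖y‖ ∩ ball y η, ‖f z - c‖ ≤ ε)
    (hfar : ∀ z ∈ closedAnnulus E s ‖y‖, ‖f z - c‖ ≤ M) :
    ‖weightedMean μ (closedAnnulus E s ‖y‖) (radialMinimaKernel α y) f - c‖ ≤
      ε + M * kernelTailBound (finrank ℝ E) α η s ‖y‖ := by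
  have hint := integrableOn_radialMinimaKernel (μ := μ) hα hs y
  have hy : y ∈ closedAnnulus E s ‖y‖ := ⟨hsy.le, le_rfl⟩
  have hε : 0 ≤ ε := (norm_nonneg _).trans (hnear y ⟨hy, mem_ball_self hη⟩)
  have hM : 0 ≤ M := (norm_nonneg _).trans (hfar y hy)
  refine (norm_weightedMean_sub_le (isClosed_closedAnnulus s _).measurableSet measurableSet_ball
    hint (hint.smul_continuousOn hf (isCompact_closedAnnulus s _))
    (fun z hz => radialMinimaKernel_nonneg hz.2) 
    (setIntegral_radialMinimaKernel_pos hα hs hsy) hε hnear hfar).trans ?_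
  gcongr
  exact setIntegral_radialMinimaKernel_sdiff_ball_div_le hα hs hη hsy

theorem eventually_norm_weightedMean_radialMinimaKernel_sub_le [Nontrivial E] {α r : ℝ}
    (hα : 0 < α) (hr : 0 < r) (hf : ContinuousOn f (closedBall 0 r)) {ε : ℝ} (hε : 0 < ε) :
    ∀ᶠ δ in nhdsWithin 0 (Ioi 0), ∀ y : {y : E // r - δ < ‖y‖ ∧ ‖y‖ ≤ r},
      ‖weightedMean μ (closedAnnulus E (r - δ) ‖(y : E)‖) (radialMinimaKernel α (y : E)) f - f y‖
        ≤ ε := by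
  have hcompact : IsCompact (closedBall (0 : E) r) := isCompact_closedBall 0 r
  obtain ⟨C, hC⟩ := hcompact.exists_bound_of_continuousOn hf
  have hC0 : 0 ≤ C := (norm_nonneg _).trans (hC 0 (mem_closedBall_self hr.le))
  obtain ⟨η, hη, hosc⟩ := uniformContinuousOn_iff.1
    (hcompact.uniformContinuousOn_of_continuous hf) (ε / 2) (half_pos hε)
  have htail : Tendsto (fun δ => 2 * C * kernelTailBound (finrank ℝ E) α η (r - δ) r)
      (nhdsWithin 0 (Ioi 0)) (nhds 0) := by
    have hsub : Tendsto (fun δ => r - δ) (nhdsWithin 0 (Ioi 0)) (nhds r) :=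
      ((continuous_sub_left r).tendsto' 0 r (sub_zero r)).mono_left nhdsWithin_le_nhds
    simpa using ((tendsto_kernelTailBound (finrank ℝ E) α η hr.ne').comp hsub).const_mul (2 * C)
  filter_upwards [htail.eventually_le_const (half_pos hε), Ioo_mem_nhdsGT hr]
    with δ hδ ⟨_, hδr⟩ ⟨y, hry, hyr⟩
  have hs : 0 < r - δ := sub_pos.2 hδr
  have hsub : closedAnnulus E (r - δ) ‖y‖ ⊆ closedBall 0 r :=
    (closedAnnulus_subset_closedBall _ _).trans (closedBall_subset_closedBall hyr)
  have hy : y ∈ closedBall (0 : E) r := mem_closedBall_zero_iff.2 hyr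
  calc _ ≤ ε / 2 + 2 * C * kernelTailBound (finrank ℝ E) α η (r - δ) ‖y‖ :=
        norm_weightedMean_radialMinimaKernel_sub_le hα hs hη hry (hf.mono hsub)
          (fun z hz => by simpa only [dist_eq_norm] using (hosc z (hsub hz.1) y hy hz.2).le)
          fun z hz => by linarith [norm_sub_le (f z) (f y), hC z (hsub hz), hC y hy]
    _ ≤ ε / 2 + 2 * C * kernelTailBound (finrank ℝ E) α η (r - δ) r := by
        gcongr
        exact kernelTailBound_mono hα.le hη.le hs hry.le hyr
    _ ≤ ε := by linarith

theorem closest_reach_kernel_uniform_approx_general [Nontrivial E] {α r : ℝ} (hα : 0 < α)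
    (hr : 0 < r) (hf : ContinuousOn f (closedBall 0 r)) :
    Tendsto (fun δ : ℝ => ⨆ y : {y : E // r - δ < ‖y‖ ∧ ‖y‖ ≤ r},
        ‖weightedMean μ (closedAnnulus E (r - δ) ‖(y : E)‖) (radialMinimaKernel α (y : E)) f - f y‖)
      (nhdsWithin 0 (Ioi 0)) (nhds 0) :=
  tendsto_iSup_zero_of_eventually_forall_le (fun _ _ => norm_nonneg _) fun _ hε =>
    eventually_norm_weightedMean_radialMinimaKernel_sub_le hα hr hf hε

end RadialMinima

theorem closest_reach_kernel_uniform_approx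
    (d : ℕ) (hd : 2 ≤ d) (α : ℝ) (hα0 : 0 < α) (hα2 : α < 2)
    (r : ℝ) (hr : 0 < r)
    (f : EuclideanSpace ℝ (Fin d) → ℝ) (hf : Continuous f)
    (hfb : ∃ C, ∀ y, |f y| ≤ C) :
    Tendsto (fun δ : ℝ =>
        ⨆ y : {y : EuclideanSpace ℝ (Fin d) // r - δ < ‖y‖ ∧ ‖y‖ ≤ r},
          |(∫ z in {z : EuclideanSpace ℝ (Fin d) | r - δ ≤ ‖z‖ ∧ ‖z‖ ≤ ‖(y : EuclideanSpace ℝ (Fin d))‖},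
                ((‖(y : EuclideanSpace ℝ (Fin d))‖ ^ 2 - ‖z‖ ^ 2) ^ (α / 2) /
                  (‖z‖ ^ α * ‖z - (y : EuclideanSpace ℝ (Fin d))‖ ^ d)) * f z) /
              (∫ z in {z : EuclideanSpace ℝ (Fin d) | r - δ ≤ ‖z‖ ∧ ‖z‖ ≤ ‖(y : EuclideanSpace ℝ (Fin d))‖},
                (‖(y : EuclideanSpace ℝ (Fin d))‖ ^ 2 - ‖z‖ ^ 2) ^ (α / 2) /
                  (‖z‖ ^ α * ‖z - (y : EuclideanSpace ℝ (Fin d))‖ ^ d))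
            - f (y : EuclideanSpace ℝ (Fin d))|)
      (nhdsWithin 0 (Ioi 0)) (nhds 0) := by
  have : Nontrivial (EuclideanSpace ℝ (Fin d)) :=
    Module.nontrivial_of_finrank_pos (R := ℝ) (by rw [finrank_euclideanSpace_fin]; omega)
  simpa only [weightedMean, closedAnnulus, radialMinimaKernel, finrank_euclideanSpace_fin,
    smul_eq_mul, inv_mul_eq_div, Real.norm_eq_abs] using
    closest_reach_kernel_uniform_approx_general (μ := volume) hα0 hr hf.continuousOn
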